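/- Let K be a unique factorization domain of characteristic p > 0 and let d be a K-derivation of K[x,y]. Write d(x) = Σ_{0≤i,j<p} a_{ij} x^i y^j and d(y) = Σ_{0≤i,j<p} b_{ij} x^i y^j, where a_{ij}, b_{ij} ∈ K[x^p, y^p] (this representation is unique). Then d is a Jacobian derivation (i.e. d = d_f for some f ∈ K[x,y]) if and only if d* = 0, a_{0,p−1} = 0 and b_{p−1,0} = 0. -/

import Mathlib

open MvPolynomial

/-!
Since `d = d_f` means `∂f/∂x = d y` and `∂f/∂y = -d x`, the question is when the `1`-form
`(d y) dx - (d x) dy` is exact, and `d* = 0` says that it is closed. In a ring whose integers are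
zero or invertible, the coefficient of a primitive of a closed form `Σ ω_i dx_i` at a monomial `x^s`
is found by dividing by any invertible exponent `s_i`; closedness makes the result independent of
`i`. The only obstruction is at monomials all of whose exponents vanish in the ring. In
characteristic `p` these are the monomials of `K[x^p, y^p]`, and the coefficients of `d x` and `d y`
that they involve are the ones collected in `a_{0,p-1}` and `b_{p-1,0}`.
-/

namespace JacobianCriterion

open Finsupp (single)

section ClosedForms

variable {σ R : Type*} [CommSemiring R]

theorem pderiv_pderiv_comm (i j : σ) (f : MvPolynomial σ R) :
    pderiv i (pderiv j f) = pderiv j (pderiv i f) := by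
  ext s
  obtain rfl | hij := eq_or_ne i j
  · rfl
  · simp only [coeff_pderiv, Finsupp.add_apply, Finsupp.single_eq_of_ne hij,
      Finsupp.single_eq_of_ne hij.symm, add_zero, add_right_comm s, mul_right_comm]

theorem coeff_mul_eq_coeff_mul_of_closed {ω : σ → MvPolynomial σ R}
    (hω : ∀ i j, pderiv i (ω j) = pderiv j (ω i)) {i j : σ} {s t u : σ →₀ ℕ}
    (ht : t + single i 1 = s) (hu : u + single j 1 = s) :
    coeff t (ω i) * (s j : R) = coeff u (ω j) * (s i : R) := by
  subst hu
  obtain rfl | hij := eq_or_ne i j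
  · rw [add_right_cancel ht]
  · obtain ⟨v, rfl⟩ : ∃ v, t = v + single j 1 := by
      refine le_iff_exists_add'.mp (Finsupp.single_le_iff.mpr ?_)
      have htj := DFunLike.congr_fun ht j
      simp only [Finsupp.add_apply, Finsupp.single_eq_same,
        Finsupp.single_eq_of_ne hij.symm] at htj
      omega
    obtain rfl : v + single i 1 = u := add_right_cancel (by rwa [add_right_comm] at ht)
    simpa [coeff_pderiv, Finsupp.single_eq_of_ne hij, Finsupp.single_eq_of_ne hij.symm]
      using congrArg (coeff v) (hω j i)

theorem exists_coeff_eq_mul_of_closed (hR : ∀ n : ℕ, (n : R) = 0 ∨ IsUnit (n : R))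
    {ω : σ → MvPolynomial σ R} (hω : ∀ i j, pderiv i (ω j) = pderiv j (ω i))
    (hω₀ : ∀ i t, (t i + 1 : R) = 0 → (∀ j ≠ i, (t j : R) = 0) → coeff t (ω i) = 0)
    (s : σ →₀ ℕ) :
    ∃ c : R, ∀ i t, t + single i 1 = s → coeff t (ω i) = c * (s i : R) := by
  by_cases hs : ∀ j, (s j : R) = 0
  · refine ⟨0, ?_⟩
    rintro i t rfl
    rw [zero_mul]
    exact hω₀ i t (by simpa using hs i)
      fun j hji => by simpa [Finsupp.single_eq_of_ne hji] using hs j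
  · obtain ⟨j, hj⟩ := not_forall.mp hs
    have hunit : IsUnit (s j : R) := (hR (s j)).resolve_left hj
    obtain ⟨u, hu⟩ : ∃ u, s = u + single j 1 := by
      refine le_iff_exists_add'.mp (Finsupp.single_le_iff.mpr (Nat.one_le_iff_ne_zero.mpr ?_))
      exact fun h => hj (by rw [h, Nat.cast_zero])
    refine ⟨coeff u (ω j) * Ring.inverse (s j : R), fun i t ht => ?_⟩
    rw [mul_right_comm, ← coeff_mul_eq_coeff_mul_of_closed hω ht hu.symm,
      Ring.mul_inverse_cancel_right _ _ hunit]

/-- The Poincaré lemma for polynomial `1`-forms `Σ ω_i dx_i`. In characteristic `p` the second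
condition excludes the terms `c x_i^(p-1) dx_i` with `c` a polynomial in the `x_j^p`, which are
closed but have no primitive. -/
theorem exists_forall_pderiv_eq_iff [Finite σ] (hR : ∀ n : ℕ, (n : R) = 0 ∨ IsUnit (n : R))
    (ω : σ → MvPolynomial σ R) :
    (∃ f, ∀ i, pderiv i f = ω i) ↔
      (∀ i j, pderiv i (ω j) = pderiv j (ω i)) ∧
        ∀ i t, (t i + 1 : R) = 0 → (∀ j ≠ i, (t j : R) = 0) → coeff t (ω i) = 0 := by
  classical
  have := Fintype.ofFinite σ
  constructor
  · rintro ⟨f, hf⟩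
    obtain rfl : (fun i => pderiv i f) = ω := funext hf
    refine ⟨fun i j => pderiv_pderiv_comm i j f, fun i t hti _ => ?_⟩
    rw [coeff_pderiv, hti, mul_zero]
  · rintro ⟨hω, hω₀⟩
    choose F hF using exists_coeff_eq_mul_of_closed hR hω hω₀
    let S : Finset (σ →₀ ℕ) := Finset.univ.biUnion fun i => (ω i).support.image (· + single i 1)
    refine ⟨∑ s ∈ S, monomial s (F s), fun i => ?_⟩
    ext t
    rw [coeff_pderiv, coeff_sum]
    simp only [coeff_monomial, Finset.sum_ite_eq']
    split_ifs with hS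
    · simpa using (hF _ i t rfl).symm
    · have ht : t ∉ (ω i).support := fun ht =>
        hS (Finset.mem_biUnion.mpr ⟨i, Finset.mem_univ i, Finset.mem_image_of_mem _ ht⟩)
      rw [zero_mul, notMem_support_iff.mp ht]

end ClosedForms

section Residues

variable {σ R : Type*} [CommSemiring R] {p : ℕ}

theorem adjoin_range_X_pow :
    Algebra.adjoin R (Set.range fun i : σ => (X i ^ p : MvPolynomial σ R)) =
      (expand p : MvPolynomial σ R →ₐ[R] MvPolynomial σ R).range := by
  rw [Algebra.adjoin_range_eq_range_aeval]
  rfl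

theorem coeff_eq_zero_of_mem_adjoin_X_pow {c : MvPolynomial σ R}
    (hc : c ∈ Algebra.adjoin R (Set.range fun i : σ => (X i ^ p : MvPolynomial σ R)))
    {s : σ →₀ ℕ} {i : σ} (hi : ¬ p ∣ s i) : coeff s c = 0 := by
  rw [adjoin_range_X_pow] at hc
  obtain ⟨g, rfl⟩ := hc
  exact coeff_expand_of_not_dvd g hi

theorem coeff_mul_monomial_eq_zero_of_not_modEq {c : MvPolynomial σ R}
    (hc : c ∈ Algebra.adjoin R (Set.range fun i : σ => (X i ^ p : MvPolynomial σ R)))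
    {r s : σ →₀ ℕ} {i : σ} (hi : ¬ s i ≡ r i [MOD p]) (k : R) :
    coeff s (c * monomial r k) = 0 := by
  rw [coeff_mul_monomial']
  split_ifs with hrs
  · have hdvd : ¬ p ∣ (s - r) i := fun h => hi ((Nat.modEq_iff_dvd' (hrs i)).mpr h).symm
    rw [coeff_eq_zero_of_mem_adjoin_X_pow hc hdvd, zero_mul]
  · rfl

theorem eq_zero_iff_coeff_sum_mul_monomial_eq_zero {ι : Type*} {S : Finset ι}
    {c : ι → MvPolynomial σ R} {r : ι → σ →₀ ℕ}
    (hc : ∀ k ∈ S, c k ∈ Algebra.adjoin R (Set.range fun i : σ => (X i ^ p : MvPolynomial σ R)))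
    (hr : ∀ k ∈ S, ∀ l ∈ S, (∀ i, r k i ≡ r l i [MOD p]) → k = l) {k : ι} (hk : k ∈ S) :
    c k = 0 ↔
      ∀ s, (∀ i, s i ≡ r k i [MOD p]) → coeff s (∑ l ∈ S, c l * monomial (r l) 1) = 0 := by
  have coeff_sum_eq : ∀ s : σ →₀ ℕ, (∀ i, s i ≡ r k i [MOD p]) →
      coeff s (∑ l ∈ S, c l * monomial (r l) 1) = coeff s (c k * monomial (r k) 1) := by
    intro s hs
    rw [coeff_sum]
    refine Finset.sum_eq_single_of_mem k hk fun l hl hlk => ?_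
    obtain ⟨i, hi⟩ : ∃ i, ¬ r l i ≡ r k i [MOD p] := by
      by_contra! h
      exact hlk (hr l hl k hk h)
    exact coeff_mul_monomial_eq_zero_of_not_modEq (hc l hl) (fun h => hi (h.symm.trans (hs i))) 1
  constructor
  · intro h s hs
    rw [coeff_sum_eq s hs, h, zero_mul, coeff_zero]
  · intro h
    ext t
    rw [coeff_zero]
    by_cases ht : ∀ i, p ∣ t i
    · have hres : ∀ i, (t + r k) i ≡ r k i [MOD p] := fun i => by
        simpa using (Nat.modEq_zero_iff_dvd.mpr (ht i)).add_right (r k i)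
      simpa using (coeff_sum_eq _ hres).symm.trans (h _ hres)
    · obtain ⟨i, hi⟩ := not_forall.mp ht
      exact coeff_eq_zero_of_mem_adjoin_X_pow (hc k hk) hi

theorem eq_zero_iff_coeff_sum_sum_eq_zero {c : ℕ → ℕ → MvPolynomial (Fin 2) R}
    (hc : ∀ i j, c i j ∈ Algebra.adjoin R ({X 0 ^ p, X 1 ^ p} : Set (MvPolynomial (Fin 2) R)))
    {i j : ℕ} (hi : i < p) (hj : j < p) :
    c i j = 0 ↔ ∀ s : Fin 2 →₀ ℕ, s 0 ≡ i [MOD p] → s 1 ≡ j [MOD p] →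
      coeff s (∑ i ∈ Finset.range p, ∑ j ∈ Finset.range p, c i j * X 0 ^ i * X 1 ^ j) = 0 := by
  have hpair : ({X 0 ^ p, X 1 ^ p} : Set (MvPolynomial (Fin 2) R)) =
      Set.range fun i => X i ^ p := by
    ext
    simp [eq_comm]
  have hmonomial : ∀ m n : ℕ, (X 0 ^ m * X 1 ^ n : MvPolynomial (Fin 2) R) =
      monomial (single 0 m + single 1 n) 1 := fun m n => by
    simp [X_pow_eq_monomial, monomial_mul]
  rw [hpair] at hc
  have hresidues : ∀ k ∈ Finset.range p ×ˢ Finset.range p,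
      ∀ l ∈ Finset.range p ×ˢ Finset.range p,
      (∀ i : Fin 2, (single 0 k.1 + single 1 k.2 : Fin 2 →₀ ℕ) i ≡
        (single 0 l.1 + single 1 l.2 : Fin 2 →₀ ℕ) i [MOD p]) → k = l := by
    intro k hk l hl h
    simp only [Finset.mem_product, Finset.mem_range] at hk hl
    exact Prod.ext (Nat.ModEq.eq_of_lt_of_lt (by simpa using h 0) hk.1 hl.1)
      (Nat.ModEq.eq_of_lt_of_lt (by simpa using h 1) hk.2 hl.2)
  have hij : (i, j) ∈ Finset.range p ×ˢ Finset.range p := by simp [hi, hj]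
  simpa [Finset.sum_product, Fin.forall_fin_two, mul_assoc, hmonomial] using
    eq_zero_iff_coeff_sum_mul_monomial_eq_zero (c := fun k : ℕ × ℕ => c k.1 k.2)
      (fun k _ => hc k.1 k.2) hresidues hij

end Residues

section Jacobian

variable {R : Type*} [CommRing R]

/-- The Jacobian derivation `d_f` of `R[x, y]`, with `x = X 0` and `y = X 1`. -/
noncomputable def jacobianDerivation (f : MvPolynomial (Fin 2) R) :
    Derivation R (MvPolynomial (Fin 2) R) (MvPolynomial (Fin 2) R) :=
  pderiv 0 f • pderiv 1 - pderiv 1 f • pderiv 0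

theorem jacobianDerivation_apply (f g : MvPolynomial (Fin 2) R) :
    jacobianDerivation f g = pderiv 0 f * pderiv 1 g - pderiv 1 f * pderiv 0 g := by
  simp [jacobianDerivation]

theorem eq_jacobianDerivation_iff
    {d : Derivation R (MvPolynomial (Fin 2) R) (MvPolynomial (Fin 2) R)}
    {f : MvPolynomial (Fin 2) R} :
    d = jacobianDerivation f ↔ pderiv 0 f = d (X 1) ∧ pderiv 1 f = -d (X 0) := by
  constructor
  · rintro rfl
    simp [jacobianDerivation_apply]
  · rintro ⟨hy, hx⟩
    refine derivation_ext fun i => ?_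
    fin_cases i <;> simp [jacobianDerivation_apply, hx, hy]

theorem exists_eq_jacobianDerivation_iff (hR : ∀ n : ℕ, (n : R) = 0 ∨ IsUnit (n : R))
    (d : Derivation R (MvPolynomial (Fin 2) R) (MvPolynomial (Fin 2) R)) :
    (∃ f, d = jacobianDerivation f) ↔
      pderiv 0 (d (X 0)) + pderiv 1 (d (X 1)) = 0 ∧
        (∀ s, (s 0 : R) = 0 → (s 1 : R) = -1 → coeff s (d (X 0)) = 0) ∧
        (∀ s, (s 0 : R) = -1 → (s 1 : R) = 0 → coeff s (d (X 1)) = 0) := by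
  let ω : Fin 2 → MvPolynomial (Fin 2) R := ![d (X 1), -d (X 0)]
  have hexact : ∀ f, d = jacobianDerivation f ↔ ∀ i, pderiv i f = ω i := fun f => by
    simp [eq_jacobianDerivation_iff, Fin.forall_fin_two, ω]
  have hclosed : (∀ i j, pderiv i (ω j) = pderiv j (ω i)) ↔
      pderiv 0 (d (X 0)) + pderiv 1 (d (X 1)) = 0 := by
    simp [Fin.forall_fin_two, ω, neg_eq_iff_add_eq_zero, eq_neg_iff_add_eq_zero, add_comm]
  have hobstruction :
      (∀ i t, (t i + 1 : R) = 0 → (∀ j ≠ i, (t j : R) = 0) → coeff t (ω i) = 0) ↔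
        (∀ s, (s 0 : R) = 0 → (s 1 : R) = -1 → coeff s (d (X 0)) = 0) ∧
        (∀ s, (s 0 : R) = -1 → (s 1 : R) = 0 → coeff s (d (X 1)) = 0) := by
    simp only [Fin.forall_fin_two, ω, Matrix.cons_val_zero, Matrix.cons_val_one, coeff_neg,
      neg_eq_zero, eq_neg_iff_add_eq_zero]
    grind
  simp_rw [hexact, exists_forall_pderiv_eq_iff hR, hclosed, hobstruction]

end Jacobian

theorem natCast_eq_zero_or_isUnit (R : Type*) [Ring R] (p : ℕ) [Fact p.Prime] [CharP R p]
    (n : ℕ) : (n : R) = 0 ∨ IsUnit (n : R) := by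
  rw [CharP.cast_eq_zero_iff R p, CharP.isUnit_natCast_iff (p := p) Fact.out]
  exact em _

end JacobianCriterion

open JacobianCriterion in
theorem lemma2a_jacobian_criterion_general
    {K : Type*} [CommRing K] (p : ℕ) [Fact p.Prime] [CharP K p]
    (d : Derivation K (MvPolynomial (Fin 2) K) (MvPolynomial (Fin 2) K))
    (a b : ℕ → ℕ → MvPolynomial (Fin 2) K)
    (ha : ∀ i j, a i j ∈ Algebra.adjoin K ({X 0 ^ p, X 1 ^ p} : Set (MvPolynomial (Fin 2) K)))
    (hb : ∀ i j, b i j ∈ Algebra.adjoin K ({X 0 ^ p, X 1 ^ p} : Set (MvPolynomial (Fin 2) K)))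
    (hdx : d (X 0) = ∑ i ∈ Finset.range p, ∑ j ∈ Finset.range p, a i j * X 0 ^ i * X 1 ^ j)
    (hdy : d (X 1) = ∑ i ∈ Finset.range p, ∑ j ∈ Finset.range p, b i j * X 0 ^ i * X 1 ^ j) :
    (∃ f : MvPolynomial (Fin 2) K, ∀ g,
        d g = pderiv (0 : Fin 2) f * pderiv (1 : Fin 2) g
            - pderiv (1 : Fin 2) f * pderiv (0 : Fin 2) g) ↔
      (pderiv (0 : Fin 2) (d (X 0)) + pderiv (1 : Fin 2) (d (X 1)) = 0 ∧
        a 0 (p - 1) = 0 ∧ b (p - 1) 0 = 0) := by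
  have hp : p.Prime := Fact.out
  have hzero : ∀ n : ℕ, n ≡ 0 [MOD p] ↔ (n : K) = 0 := fun n => by
    rw [← CharP.natCast_eq_natCast K p, Nat.cast_zero]
  have hneg_one : ∀ n : ℕ, n ≡ p - 1 [MOD p] ↔ (n : K) = -1 := fun n => by
    rw [← CharP.natCast_eq_natCast K p, Nat.cast_pred hp.pos, CharP.cast_eq_zero K p, zero_sub]
  have hpred : p - 1 < p := Nat.sub_one_lt hp.ne_zero
  simp_rw [← jacobianDerivation_apply, ← DFunLike.ext_iff]
  rw [exists_eq_jacobianDerivation_iff (natCast_eq_zero_or_isUnit K p),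
    eq_zero_iff_coeff_sum_sum_eq_zero ha hp.pos hpred,
    eq_zero_iff_coeff_sum_sum_eq_zero hb hpred hp.pos, ← hdx, ← hdy]
  simp_rw [hzero, hneg_one]

/-- Lemma 2 a).  `K` a UFD of characteristic `p > 0`, `d` a
`K`-derivation of `K[x,y]` (with `x = X 0`, `y = X 1`), and
`d(x) = Σ_{0≤i,j<p} a_{ij} x^i y^j`, `d(y) = Σ_{0≤i,j<p} b_{ij} x^i y^j` with
`a_{ij}, b_{ij} ∈ K[x^p, y^p]`.  Then `d` is a Jacobian derivation iff
`d* = 0`, `a_{0,p-1} = 0` and `b_{p-1,0} = 0`. -/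
theorem lemma2a_jacobian_criterion
    {K : Type*} [CommRing K] [IsDomain K] [UniqueFactorizationMonoid K]
    (p : ℕ) [Fact p.Prime] [CharP K p]
    (d : Derivation K (MvPolynomial (Fin 2) K) (MvPolynomial (Fin 2) K))
    (a b : ℕ → ℕ → MvPolynomial (Fin 2) K)
    (ha : ∀ i j, a i j ∈ Algebra.adjoin K ({X 0 ^ p, X 1 ^ p} : Set (MvPolynomial (Fin 2) K)))
    (hb : ∀ i j, b i j ∈ Algebra.adjoin K ({X 0 ^ p, X 1 ^ p} : Set (MvPolynomial (Fin 2) K)))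
    (hdx : d (X 0) = ∑ i ∈ Finset.range p, ∑ j ∈ Finset.range p, a i j * X 0 ^ i * X 1 ^ j)
    (hdy : d (X 1) = ∑ i ∈ Finset.range p, ∑ j ∈ Finset.range p, b i j * X 0 ^ i * X 1 ^ j) :
    (∃ f : MvPolynomial (Fin 2) K, ∀ g,
        d g = pderiv (0 : Fin 2) f * pderiv (1 : Fin 2) g
            - pderiv (1 : Fin 2) f * pderiv (0 : Fin 2) g) ↔
      (pderiv (0 : Fin 2) (d (X 0)) + pderiv (1 : Fin 2) (d (X 1)) = 0 ∧
        a 0 (p - 1) = 0 ∧ b (p - 1) 0 = 0) :=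
  lemma2a_jacobian_criterion_general p d a b ha hb hdx hdy
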